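/- Let H be an infinite dimensional Hilbert space. For every 0 < ε ≤ 1 there exist bounded operators D, X ∈ B(H) with ‖[D,X] - 1‖ ≤ ε and ‖D‖·‖X‖ ≤ C·ε^{-2} for an absolute constant C. -/

import Mathlib

/-!
An infinite-dimensional Hilbert space is the orthogonal sum of two copies of itself, so `B(H)`
contains isometries `s₀`, `s₁` satisfying the Cuntz relations, and `M ↦ ∑ sᵢ Mᵢⱼ sⱼ*` identifies
`2 × 2` matrices over `B(H)` with elements of `B(H)`. The trace of a commutator of matrices over
`B(H)` is a sum of commutators of entries, which can equal `2` because
`[s₀*, s₀] + [s₁*, s₁] = 2 - (s₀ s₀* + s₁ s₁*) = 1`; this makes a unipotent matrix `!![1, N; 0, 1]`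
a commutator of matrices with bounded entries. Conjugating by `diag(c, 1)` scales the corner `N`
by `c`, and costs a factor of at most `|c|⁻¹` in the norm of each of the two matrices.
-/

section CuntzFamily

variable {ι A : Type*} [Fintype ι] [DecidableEq ι]

/-- A family of isometries in a star ring satisfying the Cuntz relations: their ranges are pairwise
orthogonal and add up to everything. Orthonormality is encoded as `sᵢ* sⱼ` being the `(i, j)` entry
of the identity matrix. -/
structure IsCuntzFamily [Semiring A] [Star A] (s : ι → A) : Prop where
  star_mul (i j : ι) : star (s i) * s j = (1 : Matrix ι ι A) i j
  sum_mul_star : ∑ i, s i * star (s i) = 1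

namespace IsCuntzFamily

section Semiring

variable [Semiring A] [Star A] {s : ι → A}

theorem star_mul_self (hs : IsCuntzFamily s) (i : ι) : star (s i) * s i = 1 := by
  rw [hs.star_mul, Matrix.one_apply_eq]

theorem star_mul_of_ne (hs : IsCuntzFamily s) {i j : ι} (hij : i ≠ j) :
    star (s i) * s j = 0 := by
  rw [hs.star_mul, Matrix.one_apply_ne hij]

/-- The ring homomorphism `M ↦ ∑ sᵢ Mᵢⱼ sⱼ*` by which a Cuntz family turns matrices over `A` into
elements of `A`. -/
def matrixHom (hs : IsCuntzFamily s) : Matrix ι ι A →+* A where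
  toFun M := ∑ i, ∑ j, s i * M i j * star (s j)
  map_zero' := by simp
  map_one' := by simp [Matrix.one_apply, hs.sum_mul_star]
  map_add' M N := by simp [mul_add, add_mul, Finset.sum_add_distrib]
  map_mul' M N := by
    have cancel (i j k l : ι) : s i * M i j * star (s j) * (s k * N k l * star (s l)) =
        if j = k then s i * (M i j * N k l) * star (s l) else 0 := by
      calc s i * M i j * star (s j) * (s k * N k l * star (s l))
          = s i * M i j * (star (s j) * s k) * N k l * star (s l) := by simp only [mul_assoc]
        _ = _ := by rw [hs.star_mul, Matrix.one_apply]; split_ifs <;> simp [mul_assoc]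
    simp only [Matrix.mul_apply, Finset.sum_mul, Finset.mul_sum, cancel, Finset.sum_ite_eq',
      Finset.mem_univ, if_true]
    rw [Finset.sum_comm_cycle]
    exact Finset.sum_congr rfl fun k _ ↦ Finset.sum_comm

theorem matrixHom_apply (hs : IsCuntzFamily s) (M : Matrix ι ι A) :
    hs.matrixHom M = ∑ i, ∑ j, s i * M i j * star (s j) :=
  rfl

end Semiring

section CStarRing

variable [NormedRing A] [StarRing A] [CStarRing A] {s : ι → A}

theorem norm_le_one (hs : IsCuntzFamily s) (i : ι) : ‖s i‖ ≤ 1 := by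
  nontriviality A
  have norm_sq : ‖s i‖ * ‖s i‖ = 1 := by
    rw [← CStarRing.norm_star_mul_self, hs.star_mul_self, CStarRing.norm_one]
  nlinarith [norm_nonneg (s i)]

theorem norm_matrixHom_le (hs : IsCuntzFamily s) (M : Matrix ι ι A) :
    ‖hs.matrixHom M‖ ≤ ∑ i, ∑ j, ‖M i j‖ := by
  rw [hs.matrixHom_apply]
  refine norm_sum_le_of_le _ fun i _ ↦ norm_sum_le_of_le _ fun j _ ↦ ?_
  calc ‖s i * M i j * star (s j)‖ ≤ ‖s i‖ * ‖M i j‖ * ‖star (s j)‖ := norm_mul₃_le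
    _ ≤ 1 * ‖M i j‖ * 1 := by
      rw [norm_star]
      gcongr <;> exact hs.norm_le_one _
    _ = ‖M i j‖ := by rw [one_mul, mul_one]

end CStarRing

section Commutator

theorem matrix_commutator_eq_unipotent [Ring A] [Star A] {s : Fin 2 → A} (hs : IsCuntzFamily s) :
    !![0, star (s 1); 1, star (s 0)] * !![2 * s 0, 1; 2 * s 1, 2 * s 0] -
        !![2 * s 0, 1; 2 * s 1, 2 * s 0] * !![0, star (s 1); 1, star (s 0)] =
      !![1, -(2 * (s 0 * star (s 1)) + star (s 0)); 0, 1] := by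
  have sum_ranges : s 1 * star (s 1) + s 0 * star (s 0) = 1 := by
    rw [← hs.sum_mul_star, Fin.sum_univ_two, add_comm]
  have lower_right : (1 : A) + 2 - (2 * (s 1 * star (s 1)) + 2 * (s 0 * star (s 0))) = 1 := by
    rw [← mul_add, sum_ranges, mul_one, add_sub_cancel_right]
  ext i j
  fin_cases i <;> fin_cases j
  · simp [two_mul, mul_add, hs.star_mul_self]
  · simp [two_mul, mul_add, add_mul, hs.star_mul_of_ne]
  · simp [two_mul, mul_add, hs.star_mul_of_ne]
  · simpa [two_mul, mul_add, add_mul, hs.star_mul_self, one_add_one_eq_two] using lower_right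

theorem exists_matrix_commutator_eq_unipotent [NormedRing A] [StarRing A] [CStarRing A]
    {s : Fin 2 → A} (hs : IsCuntzFamily s) :
    ∃ (D X : Matrix (Fin 2) (Fin 2) A) (N : A), D * X - X * D = !![1, N; 0, 1] ∧
      ∑ i, ∑ j, ‖D i j‖ ≤ 3 ∧ ∑ i, ∑ j, ‖X i j‖ ≤ 7 ∧ ‖N‖ ≤ 3 := by
  have norm_star_le (i : Fin 2) : ‖star (s i)‖ ≤ 1 := (norm_star _).trans_le (hs.norm_le_one i)
  have norm_mul_le_one {a b : A} (ha : ‖a‖ ≤ 1) (hb : ‖b‖ ≤ 1) : ‖a * b‖ ≤ 1 :=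
    (norm_mul_le a b).trans (mul_le_one₀ ha (norm_nonneg b) hb)
  have norm_two_mul_le {a : A} (ha : ‖a‖ ≤ 1) : ‖2 * a‖ ≤ 2 := by
    rw [two_mul]
    linarith [norm_add_le a a]
  have norm_one_le : ‖(1 : A)‖ ≤ 1 := by
    rw [← hs.star_mul_self 0]
    exact norm_mul_le_one (norm_star_le 0) (hs.norm_le_one 0)
  refine ⟨_, _, _, hs.matrix_commutator_eq_unipotent, ?_, ?_, ?_⟩
  · simp only [Fin.sum_univ_two, Matrix.of_apply, Matrix.cons_val, norm_zero]
    linarith [norm_star_le 0, norm_star_le 1]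
  · simp only [Fin.sum_univ_two, Matrix.of_apply, Matrix.cons_val]
    linarith [norm_two_mul_le (hs.norm_le_one 0), norm_two_mul_le (hs.norm_le_one 1)]
  · rw [norm_neg]
    linarith [norm_add_le (2 * (s 0 * star (s 1))) (star (s 0)), norm_star_le 0,
      norm_two_mul_le (norm_mul_le_one (hs.norm_le_one 0) (norm_star_le 1))]

end Commutator

end IsCuntzFamily

end CuntzFamily

section DiagonalConj

variable {ι 𝕜 A : Type*} [Fintype ι] [DecidableEq ι]

/-- Conjugation of matrices by the invertible diagonal scalar matrix with entries `d i`. -/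
def diagonalConj [CommSemiring 𝕜] [Semiring A] [Algebra 𝕜 A] (d : ι → 𝕜ˣ) :
    Matrix ι ι A →+* Matrix ι ι A where
  toFun M := .of fun i j ↦ (d i / d j) • M i j
  map_zero' := by ext; simp
  map_one' := by
    ext i j
    obtain rfl | hij := eq_or_ne i j <;> simp [*]
  map_add' M N := by ext; simp
  map_mul' M N := by
    ext i j
    simp [Matrix.mul_apply, Finset.smul_sum, smul_mul_smul_comm]

theorem diagonalConj_apply [CommSemiring 𝕜] [Semiring A] [Algebra 𝕜 A] (d : ι → 𝕜ˣ)
    (M : Matrix ι ι A) (i j : ι) : diagonalConj d M i j = (d i / d j) • M i j :=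
  rfl

theorem sum_norm_diagonalConj_le [NormedField 𝕜] [SeminormedRing A] [NormedAlgebra 𝕜 A]
    {d : ι → 𝕜ˣ} {K : ℝ} (hd : ∀ i j, ‖((d i / d j : 𝕜ˣ) : 𝕜)‖ ≤ K) (M : Matrix ι ι A) :
    ∑ i, ∑ j, ‖diagonalConj d M i j‖ ≤ K * ∑ i, ∑ j, ‖M i j‖ := by
  simp_rw [Finset.mul_sum, diagonalConj_apply, Units.smul_def, norm_smul]
  gcongr
  exact hd _ _

end DiagonalConj

theorem IsCuntzFamily.exists_norm_commutator_sub_one_le {𝕜 A : Type*} [NormedField 𝕜]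
    [NormedRing A] [StarRing A] [CStarRing A] [NormedAlgebra 𝕜 A] {s : Fin 2 → A}
    (hs : IsCuntzFamily s) {c : 𝕜} (hc₀ : c ≠ 0) (hc₁ : ‖c‖ ≤ 1) :
    ∃ D X : A, ‖D * X - X * D - 1‖ ≤ 3 * ‖c‖ ∧ ‖D‖ * ‖X‖ ≤ 21 * ‖c‖⁻¹ ^ 2 := by
  obtain ⟨D, X, N, commutator_eq, hD, hX, hN⟩ := hs.exists_matrix_commutator_eq_unipotent
  let d : Fin 2 → 𝕜ˣ := ![Units.mk0 c hc₀, 1]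
  have one_le_inv : 1 ≤ ‖c‖⁻¹ := (one_le_inv₀ (norm_pos_iff.2 hc₀)).2 hc₁
  have norm_ratio_le (i j : Fin 2) : ‖((d i / d j : 𝕜ˣ) : 𝕜)‖ ≤ ‖c‖⁻¹ := by
    fin_cases i <;> fin_cases j <;> simp [d, one_le_inv, hc₁.trans one_le_inv]
  let φ : Matrix (Fin 2) (Fin 2) A →+* A := hs.matrixHom.comp (diagonalConj d)
  have norm_φ_le (M : Matrix (Fin 2) (Fin 2) A) : ‖φ M‖ ≤ ‖c‖⁻¹ * ∑ i, ∑ j, ‖M i j‖ :=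
    (hs.norm_matrixHom_le _).trans (sum_norm_diagonalConj_le norm_ratio_le M)
  refine ⟨φ D, φ X, ?_, ?_⟩
  · have sub_one : φ D * φ X - φ X * φ D - 1 = φ !![0, N; 0, 0] := by
      have corner : !![1, N; 0, 1] - 1 = !![0, N; 0, 0] := by
        ext i j
        fin_cases i <;> fin_cases j <;> simp
      rw [← map_mul, ← map_mul, ← map_sub, ← map_one φ, ← map_sub, commutator_eq, corner]
    calc ‖φ D * φ X - φ X * φ D - 1‖
        ≤ ∑ i, ∑ j, ‖diagonalConj d !![0, N; 0, 0] i j‖ := sub_one ▸ hs.norm_matrixHom_le _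
      _ = ‖c‖ * ‖N‖ := by
        simp [diagonalConj_apply, d, Units.smul_def, norm_smul]
      _ ≤ 3 * ‖c‖ := by rw [mul_comm]; gcongr
  · calc ‖φ D‖ * ‖φ X‖ ≤ (‖c‖⁻¹ * 3) * (‖c‖⁻¹ * 7) := by
          gcongr
          · exact (norm_φ_le D).trans (by gcongr)
          · exact (norm_φ_le X).trans (by gcongr)
      _ = 21 * ‖c‖⁻¹ ^ 2 := by ring

section Hilbert

theorem nonempty_prod_equiv_of_infinite (ι κ : Type*) [Finite ι] [Nonempty ι] [Infinite κ] :
    Nonempty (ι × κ ≃ κ) := by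
  rw [← Cardinal.lift_mk_eq', Cardinal.mk_prod, Cardinal.lift_mul]
  simp only [Cardinal.lift_lift]
  refine Cardinal.mul_eq_right (by simp) ?_ (by simp)
  calc Cardinal.lift (Cardinal.mk ι) ≤ Cardinal.aleph0 := by simp
    _ ≤ Cardinal.lift (Cardinal.mk κ) := by simp

variable {𝕜 H : Type*} [RCLike 𝕜] [NormedAddCommGroup H] [InnerProductSpace 𝕜 H]

theorem infinite_of_hilbertBasis {κ : Type*} (b : HilbertBasis κ 𝕜 H)
    (hH : ¬ FiniteDimensional 𝕜 H) : Infinite κ := by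
  by_contra hκ
  rw [not_infinite_iff_finite] at hκ
  have := Fintype.ofFinite κ
  exact hH b.toOrthonormalBasis.toBasis.finiteDimensional_of_finite

theorem exists_linearIsometry_apply_hilbertBasis {κ E : Type*} [NormedAddCommGroup E]
    [InnerProductSpace 𝕜 E] [CompleteSpace E] (b : HilbertBasis κ 𝕜 H) {v : κ → E}
    (hv : Orthonormal 𝕜 v) : ∃ L : H →ₗᵢ[𝕜] E, ∀ k, L (b k) = v k := by
  classical
  refine ⟨hv.orthogonalFamily.linearIsometry.comp b.repr.toLinearIsometry, fun k ↦ ?_⟩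
  rw [LinearIsometry.coe_comp, Function.comp_apply, LinearIsometryEquiv.coe_toLinearIsometry,
    b.repr_self, hv.orthogonalFamily.linearIsometry_apply_single,
    LinearIsometry.toSpanSingleton_apply, one_smul]

theorem exists_isCuntzFamily [CompleteSpace H] (hH : ¬ FiniteDimensional 𝕜 H) (ι : Type*)
    [Fintype ι] [DecidableEq ι] [Nonempty ι] : ∃ s : ι → H →L[𝕜] H, IsCuntzFamily s := by
  classical
  obtain ⟨κ, b, -⟩ := exists_hilbertBasis 𝕜 H
  have := infinite_of_hilbertBasis b hH
  obtain ⟨e⟩ := nonempty_prod_equiv_of_infinite ι κ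
  have orthonormal_e : Orthonormal 𝕜 (b ∘ e) := b.orthonormal.comp e e.injective
  choose L hL using fun i ↦ exists_linearIsometry_apply_hilbertBasis b
    (orthonormal_e.comp (fun k ↦ (i, k)) (Prod.mk_right_injective i))
  let s (i : ι) : H →L[𝕜] H := (L i).toContinuousLinearMap
  have s_apply (i : ι) (k : κ) : s i (b k) = (b ∘ e) (i, k) := hL i k
  have dense_span : Dense (Submodule.span 𝕜 (Set.range b) : Set H) :=
    Submodule.dense_iff_topologicalClosure_eq_top.2 b.dense_span
  have star_mul (i j : ι) : star (s i) * s j = (1 : Matrix ι ι (H →L[𝕜] H)) i j := by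
    refine ContinuousLinearMap.ext_on dense_span ?_
    rintro _ ⟨l, rfl⟩
    refine b.repr.injective (lp.ext (funext fun k ↦ ?_))
    rw [b.repr_apply_apply, b.repr_apply_apply, ContinuousLinearMap.star_eq_adjoint,
      mul_apply_eq_comp, ContinuousLinearMap.adjoint_inner_right, s_apply, s_apply,
      orthonormal_iff_ite.1 orthonormal_e, Matrix.one_apply]
    obtain rfl | hij := eq_or_ne i j
    · simp [orthonormal_iff_ite.1 b.orthonormal]
    · simp [hij]
  refine ⟨s, star_mul, ContinuousLinearMap.ext_on dense_span ?_⟩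
  rintro _ ⟨m, rfl⟩
  obtain ⟨⟨j, k⟩, rfl⟩ := e.surjective m
  have sum_mul_star_mul : (∑ i, s i * star (s i)) * s j = s j := by
    simp [Finset.sum_mul, mul_assoc, star_mul, Matrix.one_apply]
  simpa [s_apply] using DFunLike.congr_fun sum_mul_star_mul (b k)

end Hilbert

theorem brown_pearcy_bound_general {𝕜 H : Type*} [RCLike 𝕜] [NormedAddCommGroup H]
    [InnerProductSpace 𝕜 H] [CompleteSpace H] (hH : ¬ FiniteDimensional 𝕜 H) {ε : ℝ}
    (hε₀ : 0 < ε) (hε₁ : ε ≤ 1) :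
    ∃ D X : H →L[𝕜] H, ‖D * X - X * D - 1‖ ≤ ε ∧ ‖D‖ * ‖X‖ ≤ 189 * ε⁻¹ ^ 2 := by
  obtain ⟨s, hs⟩ := exists_isCuntzFamily hH (Fin 2)
  have norm_c : ‖((ε / 3 : ℝ) : 𝕜)‖ = ε / 3 := RCLike.norm_of_nonneg (by positivity)
  obtain ⟨D, X, hDX, hnorm⟩ := hs.exists_norm_commutator_sub_one_le
    (c := ((ε / 3 : ℝ) : 𝕜)) (norm_pos_iff.1 (by rw [norm_c]; positivity))
    (by rw [norm_c]; linarith)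
  rw [norm_c] at hDX hnorm
  exact ⟨D, X, hDX.trans_eq (by ring), hnorm.trans_eq (by ring)⟩

/-- Brown–Pearcy/Popa: on an infinite dimensional Hilbert space, for every `0 < ε ≤ 1` there
exist `D, X` with `‖[D,X] - 1‖ ≤ ε` and `‖D‖‖X‖ = O(ε⁻²)`. -/
theorem brown_pearcy_bound : ∃ C : ℝ, 0 < C ∧
    ∀ (H : Type) [NormedAddCommGroup H] [InnerProductSpace ℂ H] [CompleteSpace H],
      ¬ FiniteDimensional ℂ H → ∀ ε : ℝ, 0 < ε → ε ≤ 1 →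
        ∃ D X : H →L[ℂ] H, ‖D * X - X * D - 1‖ ≤ ε ∧ ‖D‖ * ‖X‖ ≤ C * ε⁻¹ ^ 2 :=
  ⟨189, by norm_num, fun _ _ _ _ hH _ hε₀ hε₁ ↦ brown_pearcy_bound_general hH hε₀ hε₁⟩
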